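/- (Deterministic backward Skorokhod problem with two continuous barriers.) Let l, u : [0,T] → ℝ be continuous with inf_{t∈[0,T]}(u_t − l_t) > 0, let ȳ : [0,T] → ℝ be continuous, and let a ∈ ℝ with l_T ≤ a ≤ u_T. Then there exists a unique pair (y, k) of continuous functions on [0,T] such that: (i) y_t = a + ȳ_T − ȳ_t + k_T − k_t and l_t ≤ y_t ≤ u_t for all t ∈ [0,T]; (ii) k_0 = 0, k is of bounded variation on [0,T], and for all 0 ≤ s < t ≤ T one has k_t ≥ k_s whenever y_v < u_v for every v ∈ (s,t], and k_t ≤ k_s whenever y_v > l_v for every v ∈ (s,t]. Moreover, for every t ∈ [0,T]: k_T − k_t = −max{ (a − u_T)⁺ ∧ inf_{t≤v≤T}(a + ȳ_T − ȳ_v − l_v), sup_{t≤s≤T}[ (a + ȳ_T − ȳ_s − u_s) ∧ inf_{t≤v≤s}(a + ȳ_T − ȳ_v − l_v) ] }. -/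

import Mathlib

open Set

/-- The minimality (Skorokhod) condition in its equivalent increment form: `k` may only
increase on intervals where `y` stays strictly below `u` and may only decrease on intervals
where `y` stays strictly above `l`. -/
def MinimalityIncr (T : ℝ) (y l u k : ℝ → ℝ) : Prop :=
  ∀ s t : ℝ, 0 ≤ s → s < t → t ≤ T →
    ((∀ v, s < v → v ≤ t → y v < u v) → k s ≤ k t) ∧
    ((∀ v, s < v → v ≤ t → l v < y v) → k t ≤ k s)


/-- one-sided monotonicity -/
lemma sk_mono_closed (f m : ℝ → ℝ) (s t : ℝ) (hst : s ≤ t)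
    (hm : ContinuousOn m (Icc s t))
    (hA : ∀ p ∈ Icc s t, ∃ r ∈ Icc p t, m p ≤ max (m t) (f r))
    (h : ∀ v ∈ Icc s t, f v < m v) : m s ≤ m t := by
  obtain ⟨p, hp, hmax⟩ := isCompact_Icc.exists_isMaxOn (nonempty_Icc.2 hst) hm
  obtain ⟨r, hr, hle⟩ := hA p hp
  have h1 : m s ≤ m p := hmax (left_mem_Icc.2 hst)
  rcases le_max_iff.1 hle with h2 | h2
  · exact h1.trans h2
  · have hr' : r ∈ Icc s t := ⟨hp.1.trans hr.1, hr.2⟩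
    have h3 : m r ≤ m p := hmax hr'
    have := h r hr'
    linarith

lemma sk_mono (f m : ℝ → ℝ) (s t : ℝ) (hst : s < t)
    (hm : ContinuousOn m (Icc s t))
    (hA : ∀ p ∈ Icc s t, ∃ r ∈ Icc p t, m p ≤ max (m t) (f r))
    (h : ∀ v, s < v → v ≤ t → f v < m v) : m s ≤ m t := by
  have hc : Filter.Tendsto m (nhdsWithin s (Ioc s t)) (nhds (m s)) :=
    (hm s (left_mem_Icc.2 hst.le)).mono_left (nhdsWithin_mono _ Ioc_subset_Icc_self)
  have : (nhdsWithin s (Ioc s t)).NeBot := by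
    rw [nhdsWithin_Ioc_eq_nhdsGT hst]; infer_instance
  refine le_of_tendsto hc ?_
  filter_upwards [self_mem_nhdsWithin] with x hx
  have hsub : Icc x t ⊆ Icc s t := Icc_subset_Icc_left hx.1.le
  exact sk_mono_closed f m x t hx.2 (hm.mono hsub) (fun p hp => hA p (hsub hp))
    (fun v hv => h v (hx.1.trans_le hv.1) hv.2)

lemma sk_core (T ε : ℝ) (hT : 0 < T) (hε : 0 < ε) (f g m : ℝ → ℝ)
    (hf : ContinuousOn f (Icc 0 T)) (hg : ContinuousOn g (Icc 0 T))
    (hgap : ∀ t ∈ Icc 0 T, f t + ε ≤ g t)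
    (hfm : ∀ t ∈ Icc 0 T, f t ≤ m t) (hmg : ∀ t ∈ Icc 0 T, m t ≤ g t)
    (hA : ∀ s t, 0 ≤ s → s ≤ t → t ≤ T → ∃ r ∈ Icc s t, m s ≤ max (m t) (f r))
    (hB : ∀ s t, 0 ≤ s → s ≤ t → t ≤ T → ∃ r ∈ Icc s t, min (m t) (g r) ≤ m s) :
    ContinuousOn m (Icc 0 T) ∧ BoundedVariationOn m (Icc 0 T) ∧
    (∀ s t, 0 ≤ s → s < t → t ≤ T →
      ((∀ v, s < v → v ≤ t → f v < m v) → m s ≤ m t) ∧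
      ((∀ v, s < v → v ≤ t → m v < g v) → m t ≤ m s)) := by
  have hfu := Metric.uniformContinuousOn_iff.1
    (isCompact_Icc.uniformContinuousOn_of_continuous hf)
  have hgu := Metric.uniformContinuousOn_iff.1
    (isCompact_Icc.uniformContinuousOn_of_continuous hg)
  have key : ∀ e > 0, ∃ δ > 0, ∀ s t, 0 ≤ s → s ≤ t → t ≤ T → t - s < δ →
      |m s - m t| < e ∧ |f s - f t| < e ∧ |g s - g t| < e := by
    intro e he
    obtain ⟨d1, hd1, h1⟩ := hfu e he
    obtain ⟨d2, hd2, h2⟩ := hgu e he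
    refine ⟨min d1 d2, lt_min hd1 hd2, fun s t hs hst ht hd => ?_⟩
    have hd1' := hd.trans_le (min_le_left _ _)
    have hd2' := hd.trans_le (min_le_right _ _)
    have tm : t ∈ Icc 0 T := ⟨hs.trans hst, ht⟩
    have F : ∀ r ∈ Icc s t, |f r - f t| < e := fun r hr => by
      have := h1 r ⟨hs.trans hr.1, hr.2.trans ht⟩ t tm (by
        rw [Real.dist_eq, abs_sub_comm, abs_of_nonneg (by linarith [hr.2])]; linarith [hr.1])
      rwa [Real.dist_eq] at this
    have Gq : ∀ r ∈ Icc s t, |g r - g t| < e := fun r hr => by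
      have := h2 r ⟨hs.trans hr.1, hr.2.trans ht⟩ t tm (by
        rw [Real.dist_eq, abs_sub_comm, abs_of_nonneg (by linarith [hr.2])]; linarith [hr.1])
      rwa [Real.dist_eq] at this
    refine ⟨?_, F s ⟨le_rfl, hst⟩, Gq s ⟨le_rfl, hst⟩⟩
    obtain ⟨r, hr, hle⟩ := hA s t hs hst ht
    obtain ⟨r', hr', hle'⟩ := hB s t hs hst ht
    have e1 := abs_lt.1 (F r hr)
    have e2 := abs_lt.1 (Gq r' hr')
    have e3 := hfm t tm
    have e4 := hmg t tm
    rw [abs_lt]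
    constructor
    · rcases min_le_iff.1 hle' with h | h <;> linarith
    · rcases le_max_iff.1 hle with h | h <;> linarith
  have hc : ContinuousOn m (Icc 0 T) := by
    refine UniformContinuousOn.continuousOn (Metric.uniformContinuousOn_iff.2 fun e he => ?_)
    obtain ⟨δ, hδ, h⟩ := key e he
    refine ⟨δ, hδ, fun x hx y hy hxy => ?_⟩
    rw [Real.dist_eq] at hxy ⊢
    rcases le_total x y with hle | hle
    · exact (h x y hx.1 hle hy.2 (by rw [abs_lt] at hxy; linarith)).1
    · rw [abs_sub_comm]
      exact (h y x hy.1 hle hx.2 (by rw [abs_lt] at hxy; linarith)).1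
  have hmin : ∀ s t, 0 ≤ s → s < t → t ≤ T →
      ((∀ v, s < v → v ≤ t → f v < m v) → m s ≤ m t) ∧
      ((∀ v, s < v → v ≤ t → m v < g v) → m t ≤ m s) := by
    intro s t hs hst ht
    have hsub : Icc s t ⊆ Icc 0 T := Icc_subset_Icc hs ht
    constructor
    · intro h
      exact sk_mono f m s t hst (hc.mono hsub) (fun p hp => hA p t (hs.trans hp.1) hp.2 ht) h
    · intro h
      have := sk_mono (fun x => - g x) (fun x => - m x) s t hst (hc.mono hsub).neg
        (fun p hp => by
          obtain ⟨r, hr, hle⟩ := hB p t (hs.trans hp.1) hp.2 ht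
          refine ⟨r, hr, ?_⟩
          rw [max_neg_neg]; linarith)
        (fun v h1 h2 => by have := h v h1 h2; linarith)
      linarith
  refine ⟨hc, ?_, hmin⟩
  obtain ⟨δ, hδ, h⟩ := key (ε / 4) (by linarith)
  have piece : ∀ p q, 0 ≤ p → p ≤ q → q ≤ T → q - p < δ →
      BoundedVariationOn m (Icc p q) := by
    intro p q hp hpq hq hd
    have pm : p ∈ Icc 0 T := ⟨hp, hpq.trans hq⟩
    have hgp := hgap p pm
    have hpp : ∀ v ∈ Icc p q, |m p - m v| < ε/4 ∧ |f p - f v| < ε/4 ∧ |g p - g v| < ε/4 :=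
      fun v hv => h p v hp hv.1 (hv.2.trans hq) (by linarith [hv.2])
    by_cases hcase : f p + ε / 2 ≤ m p
    · have hmono : MonotoneOn m (Icc p q) := by
        intro x hx y hy hxy
        rcases hxy.eq_or_lt with rfl | hlt
        · exact le_rfl
        refine (hmin x y (hp.trans hx.1) hlt (hy.2.trans hq)).1 fun v h1 h2 => ?_
        obtain ⟨a1, a2, a3⟩ := hpp v ⟨hx.1.trans h1.le, h2.trans hy.2⟩
        rw [abs_lt] at a1 a2
        linarith [a1.1, a1.2, a2.1, a2.2]
      have := hmono.eVariationOn_eq (left_mem_Icc.2 hpq) (right_mem_Icc.2 hpq)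
      rw [inter_self] at this
      exact ne_top_of_le_ne_top ENNReal.ofReal_ne_top this.le
    · have hanti : MonotoneOn (fun x => - m x) (Icc p q) := by
        intro x hx y hy hxy
        rcases hxy.eq_or_lt with rfl | hlt
        · exact le_rfl
        refine neg_le_neg ((hmin x y (hp.trans hx.1) hlt (hy.2.trans hq)).2 fun v h1 h2 => ?_)
        obtain ⟨a1, a2, a3⟩ := hpp v ⟨hx.1.trans h1.le, h2.trans hy.2⟩
        rw [abs_lt] at a1 a3
        linarith [a1.1, a1.2, a3.1, a3.2]
      have := hanti.eVariationOn_eq (left_mem_Icc.2 hpq) (right_mem_Icc.2 hpq)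
      rw [inter_self] at this
      have h2 : eVariationOn (fun x => - m x) (Icc p q) = eVariationOn m (Icc p q) := by
        unfold eVariationOn
        simp only [edist_neg_neg]
      rw [h2] at this
      exact ne_top_of_le_ne_top ENNReal.ofReal_ne_top this.le
  have ind : ∀ n : ℕ, ∀ p, 0 ≤ p → p ≤ T → T - p ≤ n * (δ / 2) →
      BoundedVariationOn m (Icc p T) := by
    intro n
    induction n with
    | zero =>
      intro p hp hpT hd
      exact piece p T hp hpT le_rfl (by simp at hd; linarith)
    | succ n ih =>
      intro p hp hpT hd
      by_cases hcase : p + δ / 2 ≤ T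
      · have h1 := piece p (p + δ/2) hp (by linarith) hcase (by linarith)
        have h2 := ih (p + δ/2) (by linarith) hcase (by push_cast at hd; linarith)
        have h3 := eVariationOn.Icc_add_Icc m (s := univ) (a := p) (b := p + δ/2) (c := T)
          (by linarith) hcase (mem_univ _)
        simp only [univ_inter] at h3
        unfold BoundedVariationOn at *
        rw [← h3]
        exact ENNReal.add_ne_top.2 ⟨h1, h2⟩
      · exact piece p T hp hpT le_rfl (by linarith)
  obtain ⟨n, hn⟩ := exists_nat_ge (T / (δ / 2))
  refine ind n 0 le_rfl hT.le ?_
  rw [div_le_iff₀ (by linarith)] at hn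
  linarith

/-- one-sided uniqueness -/
lemma sk_uniq (T : ℝ) (f g m m' : ℝ → ℝ)
    (hc : ContinuousOn m (Icc 0 T)) (hc' : ContinuousOn m' (Icc 0 T)) (hTT : m T = m' T)
    (hfm : ∀ t ∈ Icc 0 T, f t ≤ m t) (hmg : ∀ t ∈ Icc 0 T, m' t ≤ g t)
    (hm : ∀ s t, 0 ≤ s → s < t → t ≤ T → (∀ v, s < v → v ≤ t → m v < g v) → m t ≤ m s)
    (hm' : ∀ s t, 0 ≤ s → s < t → t ≤ T → (∀ v, s < v → v ≤ t → f v < m' v) → m' s ≤ m' t)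
    (t : ℝ) (ht : t ∈ Icc 0 T) : m' t ≤ m t := by
  by_contra hlt
  push Not at hlt
  have hsub : Icc t T ⊆ Icc 0 T := Icc_subset_Icc_left ht.1
  have hd : ContinuousOn (fun x => m' x - m x) (Icc t T) := (hc'.mono hsub).sub (hc.mono hsub)
  have hcl : IsCompact (Icc t T ∩ (fun x => m' x - m x) ⁻¹' Iic 0) :=
    isCompact_Icc.of_isClosed_subset (hd.preimage_isClosed_of_isClosed isClosed_Icc isClosed_Iic)
      inter_subset_left
  obtain ⟨q, hq, hqmin⟩ := hcl.exists_isLeast ⟨T, right_mem_Icc.2 ht.2, by simp [hTT]⟩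
  have hqle : m' q - m q ≤ 0 := hq.2
  have htq : t < q := by
    rcases hq.1.1.eq_or_lt with h | h
    · subst h; linarith
    · exact h
  have hpos : ∀ v, t ≤ v → v < q → m v < m' v := by
    intro v h1 h2
    by_contra hcon
    push Not at hcon
    have := hqmin (show v ∈ _ from ⟨⟨h1, h2.le.trans hq.1.2⟩, by simp; linarith⟩)
    linarith
  have hc2 : Filter.Tendsto (fun x => m' x - m x) (nhdsWithin q (Ioo t q))
      (nhds (m' q - m q)) :=
    (hd q hq.1).mono_left (nhdsWithin_mono _ fun x hx => ⟨hx.1.le, hx.2.le.trans hq.1.2⟩)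
  have : (nhdsWithin q (Ioo t q)).NeBot := by
    rw [nhdsWithin_Ioo_eq_nhdsLT htq]; infer_instance
  have hge : m' t - m t ≤ m' q - m q := by
    refine ge_of_tendsto hc2 ?_
    filter_upwards [self_mem_nhdsWithin] with x hx
    have hxT : x ≤ T := hx.2.le.trans hq.1.2
    have e1 := hm t x ht.1 hx.1 hxT fun v h1 h2 =>
      (hpos v h1.le (h2.trans_lt hx.2)).trans_le (hmg v ⟨ht.1.trans h1.le, h2.trans hxT⟩)
    have e2 := hm' t x ht.1 hx.1 hxT fun v h1 h2 =>
      (hfm v ⟨ht.1.trans h1.le, h2.trans hxT⟩).trans_lt (hpos v h1.le (h2.trans_lt hx.2))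
    linarith
  linarith

/-- the explicit formula -/
lemma sk_formula (T c : ℝ) (f g : ℝ → ℝ)
    (hf : ContinuousOn f (Icc 0 T)) (hg : ContinuousOn g (Icc 0 T))
    (hfg : ∀ t ∈ Icc 0 T, f t ≤ g t) (hcg : c ≤ g T) (hfc : f T ≤ c) (m : ℝ → ℝ)
    (hm : ∀ t, m t = max (min c (sInf (g '' Icc t T)))
      (sSup ((fun s => min (f s) (sInf (g '' Icc t s))) '' Icc t T))) :
    m T = c ∧ (∀ t ∈ Icc 0 T, f t ≤ m t) ∧ (∀ t ∈ Icc 0 T, m t ≤ g t) ∧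
    (∀ s t, 0 ≤ s → s ≤ t → t ≤ T → ∃ r ∈ Icc s t, m s ≤ max (m t) (f r)) ∧
    (∀ s t, 0 ≤ s → s ≤ t → t ≤ T → ∃ r ∈ Icc s t, min (m t) (g r) ≤ m s) := by
  have hGle : ∀ s t, 0 ≤ s → t ≤ T → ∀ v ∈ Icc s t, sInf (g '' Icc s t) ≤ g v := by
    intro s t hs ht v hv
    exact csInf_le (isCompact_Icc.image_of_continuousOn
      (hg.mono (Icc_subset_Icc hs ht))).bddBelow (mem_image_of_mem g hv)
  have hleG : ∀ s t x, s ≤ t → (∀ v ∈ Icc s t, x ≤ g v) → x ≤ sInf (g '' Icc s t) := by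
    intro s t x hst h
    exact le_csInf ((nonempty_Icc.2 hst).image g) (by rintro _ ⟨v, hv, rfl⟩; exact h v hv)
  have hbdd : ∀ t, 0 ≤ t → t ≤ T →
      BddAbove ((fun s => min (f s) (sInf (g '' Icc t s))) '' Icc t T) := by
    intro t h0 ht
    obtain ⟨b, hb⟩ := (isCompact_Icc.image_of_continuousOn
      (hf.mono (Icc_subset_Icc_left h0 : Icc t T ⊆ _))).bddAbove
    refine ⟨b, ?_⟩
    rintro _ ⟨v, hv, rfl⟩
    exact (min_le_left _ _).trans (hb (mem_image_of_mem f hv))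
  have hleS : ∀ t w, 0 ≤ t → t ≤ w → w ≤ T → min (f w) (sInf (g '' Icc t w)) ≤
      sSup ((fun s => min (f s) (sInf (g '' Icc t s))) '' Icc t T) := by
    intro t w h0 h1 h2
    exact le_csSup (hbdd t h0 (h1.trans h2)) ⟨w, ⟨h1, h2⟩, rfl⟩
  have hSle : ∀ t x, t ≤ T → (∀ w, t ≤ w → w ≤ T → min (f w) (sInf (g '' Icc t w)) ≤ x) →
      sSup ((fun s => min (f s) (sInf (g '' Icc t s))) '' Icc t T) ≤ x := by
    intro t x h1 h
    exact csSup_le ((nonempty_Icc.2 h1).image _) (by rintro _ ⟨v, hv, rfl⟩; exact h v hv.1 hv.2)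
  have hlow : ∀ t ∈ Icc 0 T, f t ≤ m t := by
    intro t ht
    rw [hm]
    refine le_max_of_le_right (le_trans ?_ (hleS t t ht.1 le_rfl ht.2))
    simp [hfg t ht]
  refine ⟨?_, hlow, ?_, ?_, ?_⟩
  · rw [hm]
    simp [hcg, hfc]
  · intro t ht
    rw [hm]
    refine max_le ((min_le_right _ _).trans (hGle t T ht.1 le_rfl t (left_mem_Icc.2 ht.2))) ?_
    exact hSle t _ ht.2 fun w h1 h2 =>
      (min_le_right _ _).trans (hGle t w ht.1 h2 t (left_mem_Icc.2 h1))
  · intro s t hs hst ht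
    obtain ⟨r, hr, hmax⟩ := isCompact_Icc.exists_isMaxOn (nonempty_Icc.2 hst)
      (hf.mono (Icc_subset_Icc hs ht))
    refine ⟨r, hr, ?_⟩
    have hGm : ∀ w, t ≤ w → w ≤ T → sInf (g '' Icc s w) ≤ sInf (g '' Icc t w) :=
      fun w h1 h2 => hleG t w _ h1 fun v hv => hGle s w hs h2 v ⟨hst.trans hv.1, hv.2⟩
    rw [hm s]
    refine max_le (le_max_of_le_left ?_) (hSle s _ (hst.trans ht) fun w h1 h2 => ?_)
    · rw [hm t]
      exact le_max_of_le_left (min_le_min le_rfl (hGm T ht le_rfl))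
    · rcases le_total w t with h | h
      · exact le_max_of_le_right ((min_le_left _ _).trans (hmax ⟨h1, h⟩))
      · refine le_max_of_le_left ?_
        rw [hm t]
        exact le_max_of_le_right ((min_le_min le_rfl (hGm w h h2)).trans
          (hleS t w (hs.trans hst) h h2))
  · intro s t hs hst ht
    obtain ⟨r, hr, hmin⟩ := isCompact_Icc.exists_isMinOn (nonempty_Icc.2 hst)
      (hg.mono (Icc_subset_Icc hs ht))
    refine ⟨r, hr, ?_⟩
    have hGm : ∀ w, t ≤ w → w ≤ T → min (sInf (g '' Icc t w)) (g r) ≤ sInf (g '' Icc s w) := by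
      intro w h1 h2
      refine hleG s w _ (hst.trans h1) fun v hv => ?_
      rcases le_total v t with h | h
      · exact (min_le_right _ _).trans (hmin ⟨hv.1, h⟩)
      · exact (min_le_left _ _).trans (hGle t w (hs.trans hst) h2 v ⟨h, hv.2⟩)
    rw [hm s, hm t, min_max_distrib_right]
    refine max_le (le_max_of_le_left ?_) (le_max_of_le_right ?_)
    · rw [min_assoc]
      exact min_le_min le_rfl (hGm T ht le_rfl)
    · by_contra hcon
      push Not at hcon
      obtain ⟨h1, h2⟩ := lt_min_iff.1 hcon
      refine absurd h1 (not_lt.2 (hSle t _ ht fun w hw1 hw2 => ?_))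
      have h3 := hleS s w hs (hst.trans hw1) hw2
      have h4 : min (min (f w) (sInf (g '' Icc t w))) (g r) ≤
          min (f w) (sInf (g '' Icc s w)) := by
        rw [min_assoc]
        exact min_le_min le_rfl (hGm w hw1 hw2)
      rcases min_le_iff.1 (h4.trans h3) with h | h
      · exact h
      · exact absurd h2 (not_lt.2 h)

/-- deterministic backward Skorokhod problem with two continuous barriers:
existence, uniqueness, and the explicit formula for the reflecting term `k`
(with `y_t = a + ȳ_T − ȳ_t + k_T − k_t`). -/
theorem stmt15 (T : ℝ) (hT : 0 < T) (l u ybar : ℝ → ℝ)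
    (hl : ContinuousOn l (Icc 0 T)) (hu : ContinuousOn u (Icc 0 T))
    (hgap : ∃ ε > 0, ∀ t ∈ Icc (0:ℝ) T, ε ≤ u t - l t)
    (hy : ContinuousOn ybar (Icc 0 T))
    (a : ℝ) (haL : l T ≤ a) (haU : a ≤ u T) :
    ∃ k : ℝ → ℝ,
      (ContinuousOn k (Icc 0 T) ∧ BoundedVariationOn k (Icc 0 T) ∧ k 0 = 0 ∧
        (∀ t ∈ Icc (0:ℝ) T, l t ≤ a + ybar T - ybar t + k T - k t ∧
          a + ybar T - ybar t + k T - k t ≤ u t) ∧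
        MinimalityIncr T (fun v => a + ybar T - ybar v + k T - k v) l u k) ∧
      (∀ k' : ℝ → ℝ,
        (ContinuousOn k' (Icc 0 T) ∧ BoundedVariationOn k' (Icc 0 T) ∧ k' 0 = 0 ∧
          (∀ t ∈ Icc (0:ℝ) T, l t ≤ a + ybar T - ybar t + k' T - k' t ∧
            a + ybar T - ybar t + k' T - k' t ≤ u t) ∧
          MinimalityIncr T (fun v => a + ybar T - ybar v + k' T - k' v) l u k') →
        ∀ t ∈ Icc (0:ℝ) T, k' t = k t) ∧
      (∀ t ∈ Icc (0:ℝ) T,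
        k T - k t = -(max
          (min (max (a - u T) 0)
            (sInf ((fun v => a + ybar T - ybar v - l v) '' Icc t T)))
          (sSup ((fun s => min (a + ybar T - ybar s - u s)
            (sInf ((fun v => a + ybar T - ybar v - l v) '' Icc t s))) '' Icc t T)))) := by
  obtain ⟨ε, hε, hgap⟩ := hgap
  set f : ℝ → ℝ := fun s => a + ybar T - ybar s - u s with hfdef
  set g : ℝ → ℝ := fun v => a + ybar T - ybar v - l v with hgdef
  have hf : ContinuousOn f (Icc 0 T) := (continuousOn_const.sub hy).sub hu
  have hg : ContinuousOn g (Icc 0 T) := (continuousOn_const.sub hy).sub hl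
  have hfg : ∀ t ∈ Icc 0 T, f t + ε ≤ g t := by
    intro t ht
    have := hgap t ht
    simp only [hfdef, hgdef]; linarith
  have hc0 : max (a - u T) 0 = 0 := max_eq_right (by linarith)
  set m : ℝ → ℝ := fun t => max (min (max (a - u T) 0) (sInf (g '' Icc t T)))
      (sSup ((fun s => min (f s) (sInf (g '' Icc t s))) '' Icc t T)) with hmdef
  obtain ⟨hmT, hfm, hmg, hA, hB⟩ := sk_formula T (max (a - u T) 0) f g hf hg
    (fun t ht => by linarith [hfg t ht]) (by rw [hc0]; simp only [hgdef]; linarith)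
    (by rw [hc0]; simp only [hfdef]; linarith) m (fun t => rfl)
  rw [hc0] at hmT
  obtain ⟨hmc, hmbv, hmin⟩ := sk_core T ε hT hε f g m hf hg hfg hfm hmg hA hB
  refine ⟨fun t => m t - m 0, ⟨hmc.sub continuousOn_const, ?_, by simp, ?_, ?_⟩, ?_, ?_⟩
  · unfold BoundedVariationOn eVariationOn at *
    simpa only [edist_sub_right] using hmbv
  · intro t ht
    have h1 := hfm t ht
    have h2 := hmg t ht
    simp only [hfdef] at h1
    simp only [hgdef] at h2
    simp only [hmT]
    constructor <;> linarith
  · intro s t hs hst ht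
    obtain ⟨h1, h2⟩ := hmin s t hs hst ht
    constructor
    · intro h
      have := h1 fun v hv hv' => by
        have := h v hv hv'
        simp only [hmT] at this
        simp only [hfdef]; linarith
      simp only; linarith
    · intro h
      have := h2 fun v hv hv' => by
        have := h v hv hv'
        simp only [hmT] at this
        simp only [hgdef]; linarith
      simp only; linarith
  · rintro k ⟨kc, -, k0, kb, kmin⟩
    set n : ℝ → ℝ := fun t => k t - k T with hn
    have hnc : ContinuousOn n (Icc 0 T) := kc.sub continuousOn_const
    have hnT : n T = 0 := by simp [hn]
    have hfn : ∀ t ∈ Icc 0 T, f t ≤ n t := fun t ht => by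
      have := kb t ht
      simp only [hfdef, hn]; linarith
    have hng : ∀ t ∈ Icc 0 T, n t ≤ g t := fun t ht => by
      have := kb t ht
      simp only [hgdef, hn]; linarith
    have n1 : ∀ s t, 0 ≤ s → s < t → t ≤ T → (∀ v, s < v → v ≤ t → f v < n v) →
        n s ≤ n t := by
      intro s t hs hst ht h
      have := (kmin s t hs hst ht).1 fun v hv hv' => by
        have := h v hv hv'
        simp only [hfdef, hn] at this
        simp only; linarith
      simp only [hn]; linarith
    have n2 : ∀ s t, 0 ≤ s → s < t → t ≤ T → (∀ v, s < v → v ≤ t → n v < g v) →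
        n t ≤ n s := by
      intro s t hs hst ht h
      have := (kmin s t hs hst ht).2 fun v hv hv' => by
        have := h v hv hv'
        simp only [hgdef, hn] at this
        simp only; linarith
      simp only [hn]; linarith
    have heq : ∀ t ∈ Icc 0 T, n t = m t := fun t ht => le_antisymm
      (sk_uniq T f g m n hmc hnc (by rw [hmT, hnT]) hfm hng
        (fun s t h1 h2 h3 => (hmin s t h1 h2 h3).2) n1 t ht)
      (sk_uniq T f g n m hnc hmc (by rw [hmT, hnT]) hfn hmg n2
        (fun s t h1 h2 h3 => (hmin s t h1 h2 h3).1) t ht)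
    intro t ht
    have e1 := heq t ht
    have e2 := heq 0 ⟨le_rfl, hT.le⟩
    simp only [hn] at e1 e2
    show k t = m t - m 0
    linarith
  · intro t ht
    show m T - m 0 - (m t - m 0) = - m t
    rw [hmT]; ring
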